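/- arXiv:2506.13634 — 2 statements merged into one kernel-verified Lean document; each statement's English description precedes it below -/
import Mathlib

section
/- Let (Y,d) be a complete metric space, p ∈ (1,∞), and let f : [0,1] → Y be Borel measurable with ∫_0^1 d(f(u),y_0)^p du < ∞ for some y_0 ∈ Y, and suppose sup_{0<h<1} ∫_0^{1−h} ( d(f(u+h),f(u)) / h )^p du < ∞. Then there exists a curve f̃ ∈ AC^p(Y) (in particular f̃ is continuous) such that f(u) = f̃(u) for Lebesgue-almost every u ∈ [0,1]. -/
open MeasureTheory Set Filter
open scoped ENNReal

/-- An uncountable Borel subset of the line has a non-Borel subset. -/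
lemma countable_of_all_subsets_measurable (T : Set ℝ)
    (hT : ∀ A ⊆ T, MeasurableSet A) : T.Countable := by
  by_contra hc
  have hTm : MeasurableSet T := hT T subset_rfl
  have : StandardBorelSpace T := hTm.standardBorel
  have hc' : ¬ Countable T := by rwa [countable_coe_iff]
  have hR : ¬ Countable ℝ := not_countable
  let e : T ≃ᵐ ℝ := PolishSpace.measurableEquivOfNotCountable hc' hR
  have all : ∀ B : Set ℝ, MeasurableSet B := by
    intro B
    have h1 : MeasurableSet (Subtype.val '' (e ⁻¹' B) : Set ℝ) :=
      hT _ (by rintro _ ⟨x, -, rfl⟩; exact x.2)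
    have h2 : MeasurableSet (e ⁻¹' B) := by
      have := measurable_subtype_coe (p := (· ∈ T)) h1
      rwa [preimage_image_eq _ Subtype.val_injective] at this
    have h3 := e.symm.measurable h2
    simpa [← preimage_comp] using h3
  have hgen : (inferInstance : MeasurableSpace ℝ)
      = MeasurableSpace.generateFrom (MeasurableSpace.countableGeneratingSet ℝ) :=
    (MeasurableSpace.generateFrom_countableGeneratingSet).symm
  have hcard := MeasurableSpace.cardinal_measurableSet_le_continuum
    (s := MeasurableSpace.countableGeneratingSet ℝ)
    (((MeasurableSpace.countable_countableGeneratingSet (α := ℝ)).le_aleph0).trans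
      Cardinal.aleph0_le_continuum)
  rw [← hgen] at hcard
  have huniv : {t : Set ℝ | MeasurableSet t} = univ := by
    ext B; simp [all B]
  rw [huniv, Cardinal.mk_univ, Cardinal.mk_set, Cardinal.mk_real] at hcard
  exact absurd hcard (not_le.2 (Cardinal.cantor _))

lemma isSeparable_range_of_measurable {Y : Type*} [MetricSpace Y]
    [MeasurableSpace Y] [BorelSpace Y] (f : ℝ → Y) (hf : Measurable f) :
    TopologicalSpace.IsSeparable (range f) := by
  have key : ∀ ε > (0:ℝ≥0∞), ∀ S ⊆ range f, Metric.IsSeparated ε S → S.Countable := by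
    intro ε hε S hS hsep
    have hclosed : ∀ A ⊆ S, IsClosed A := by
      intro A hA
      have hA' := hsep.subset hA
      refine isClosed_of_spaced_out (edist_mem_uniformity hε) ?_
      intro x hx y hy hxy
      simpa using (hA' hx hy hxy).le
    have hex : ∀ y : S, ∃ x, f x = y := fun y => hS y.2
    choose σ hσ using hex
    have hσinj : Function.Injective σ := by
      intro a b hab
      apply Subtype.ext
      rw [← hσ a, ← hσ b, hab]
    classical
    -- retraction
    by_cases hne : S.Nonempty
    swap
    · rw [not_nonempty_iff_eq_empty.1 hne]; exact countable_empty
    obtain ⟨s0, hs0⟩ := hne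
    let g : ℝ → ℝ := fun x => if h : f x ∈ S then σ ⟨f x, h⟩ else σ ⟨s0, hs0⟩
    have hX : MeasurableSet (f ⁻¹' S) := hf (hclosed S subset_rfl).measurableSet
    have hg : Measurable g := by
      intro B _
      have : g ⁻¹' B = (f ⁻¹' (Subtype.val '' (σ ⁻¹' B))) ∪
          ((f ⁻¹' S)ᶜ ∩ {x | σ ⟨s0, hs0⟩ ∈ B}) := by
        ext x
        by_cases h : f x ∈ S <;> simp [g, h]
      rw [this]
      refine (hf (hclosed _ ?_).measurableSet).union (hX.compl.inter (MeasurableSet.const _))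
      rintro _ ⟨x, -, rfl⟩; exact x.2
    have hTm : MeasurableSet {x | g x = x} := measurableSet_eq_fun hg measurable_id
    have hgσ : ∀ s : S, g (σ s) = σ s := by
      intro s
      have : f (σ s) ∈ S := by rw [hσ]; exact s.2
      simp only [g, this, dif_pos]
      congr 1
      exact Subtype.ext (hσ s)
    have hTr : {x | g x = x} ⊆ range σ := by
      intro x hx
      rw [mem_ofPred_eq] at hx
      rw [← hx]
      by_cases h : f x ∈ S <;> simp [g, h]
    have hcount : (range σ).Countable := by
      apply countable_of_all_subsets_measurable
      intro A hA
      have : A = {x | g x = x} ∩ f ⁻¹' (f '' A) := by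
        ext x
        constructor
        · intro hx
          obtain ⟨s, rfl⟩ := hA hx
          exact ⟨hgσ s, _, hx, rfl⟩
        · rintro ⟨h1, a, ha, hax⟩
          obtain ⟨s, rfl⟩ := hTr h1
          obtain ⟨t, rfl⟩ := hA ha
          rw [hσ, hσ] at hax
          rwa [← Subtype.ext hax]
      rw [this]
      refine hTm.inter (hf (hclosed _ ?_).measurableSet)
      rintro _ ⟨a, ha, rfl⟩
      obtain ⟨s, rfl⟩ := hA ha
      rw [hσ]; exact s.2
    have : Countable S := by
      have : Countable (range σ) := hcount
      exact (Equiv.ofInjective σ hσinj).countable_iff.2 this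
    exact this
  obtain ⟨t, -, htc, ht⟩ := EMetric.subset_countable_closure_of_almost_dense_set (range f) (by
    intro ε hε
    obtain ⟨m, hm⟩ := zorn_subset {N : Set Y | N ⊆ range f ∧ Metric.IsSeparated ε N} (by
      intro c hc hch
      refine ⟨⋃₀ c, ⟨sUnion_subset fun s hs => (hc hs).1, ?_⟩, fun s hs => subset_sUnion_of_mem hs⟩
      exact (pairwise_sUnion hch.directedOn).2 fun s hs => (hc hs).2)
    refine ⟨m, key ε hε m hm.1.1 hm.1.2, ?_⟩
    intro y hy
    by_contra hcon
    simp only [mem_iUnion, not_exists, Metric.mem_closedEBall, not_le] at hcon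
    have hins : insert y m ∈ {N : Set Y | N ⊆ range f ∧ Metric.IsSeparated ε N} :=
      ⟨insert_subset hy hm.1.1, hm.1.2.insert fun z hz _ => hcon z hz⟩
    have : y ∈ m := hm.2 hins (subset_insert _ _) (mem_insert _ _)
    have := hcon y this
    simp at this)
  exact ⟨t, htc, ht⟩

lemma lintegral_le_of_tendsto_of_le {α : Type*} [MeasurableSpace α] {μ : Measure α}
    {F : ℕ → α → ℝ≥0∞} {G : α → ℝ≥0∞} {C : ℝ≥0∞} (hF : ∀ n, Measurable (F n))
    (hlim : ∀ᵐ x ∂μ, Tendsto (fun n => F n x) atTop (nhds (G x)))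
    (hC : ∀ n, ∫⁻ x, F n x ∂μ ≤ C) : ∫⁻ x, G x ∂μ ≤ C := by
  calc ∫⁻ x, G x ∂μ = ∫⁻ x, liminf (fun n => F n x) atTop ∂μ := by
        apply lintegral_congr_ae
        filter_upwards [hlim] with x hx
        exact hx.liminf_eq.symm
    _ ≤ liminf (fun n => ∫⁻ x, F n x ∂μ) atTop := lintegral_liminf_le hF
    _ ≤ C := by
        refine (liminf_le_liminf (v := fun _ => C) (Eventually.of_forall hC)).trans ?_
        simp

/-- The Hölder inequality against an indicator. -/
lemma rpow_setLIntegral_le {p q : ℝ} (hpq : p.HolderConjugate q) (e : ℝ → ℝ≥0∞)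
    (he : Measurable e) (A : Set ℝ) :
    ∫⁻ u in A, e u ≤ (∫⁻ u in A, e u ^ p) ^ (1 / p) * (volume A) ^ (1 / q) := by
  have := ENNReal.lintegral_mul_le_Lp_mul_Lq (volume.restrict A) hpq he.aemeasurable
    (g := fun _ => 1) aemeasurable_const
  simpa using this

lemma lintegral_window {e : ℝ → ℝ≥0∞} (he : Measurable e) (δ : ℝ) :
    ∫⁻ u, ∫⁻ x in Ioc u (u + δ), e x = ENNReal.ofReal δ * ∫⁻ x, e x := by
  have h1 : ∀ u, ∫⁻ x in Ioc u (u + δ), e x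
      = ∫⁻ x, ({z : ℝ × ℝ | z.1 < z.2 ∧ z.2 ≤ z.1 + δ}.indicator (fun z => e z.2)) (u, x) := by
    intro u
    rw [← lintegral_indicator measurableSet_Ioc]
    apply lintegral_congr
    intro x
    simp [indicator]
  have hm : MeasurableSet {z : ℝ × ℝ | z.1 < z.2 ∧ z.2 ≤ z.1 + δ} :=
    (measurableSet_lt measurable_fst measurable_snd).inter
      (measurableSet_le measurable_snd (measurable_fst.add_const δ))
  simp_rw [h1]
  rw [lintegral_lintegral_swap (f := fun u x =>
    ({z : ℝ × ℝ | z.1 < z.2 ∧ z.2 ≤ z.1 + δ}.indicator (fun z => e z.2)) (u, x))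
    ((he.comp measurable_snd).indicator hm).aemeasurable]
  have h2 : ∀ x, ∫⁻ u, ({z : ℝ × ℝ | z.1 < z.2 ∧ z.2 ≤ z.1 + δ}.indicator (fun z => e z.2)) (u, x)
      = ENNReal.ofReal δ * e x := by
    intro x
    have : ∀ u, ({z : ℝ × ℝ | z.1 < z.2 ∧ z.2 ≤ z.1 + δ}.indicator (fun z => e z.2)) (u, x)
        = (Ico (x - δ) x).indicator (fun _ => e x) u := by
      intro u
      simp only [indicator, mem_ofPred_eq, mem_Ico]
      congr 1
      apply propext
      constructor <;> rintro ⟨h1, h2⟩ <;> constructor <;> linarith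
    simp_rw [this]
    rw [lintegral_indicator_const measurableSet_Ico, Real.volume_Ico, mul_comm]
    simp
  simp_rw [h2]
  rw [lintegral_const_mul _ he]

lemma edist_intervalIntegral_le (E : ℝ → ℝ) (a b : ℝ)
    (hE : ∀ c d, IntervalIntegrable E volume c d) (h0 : ∀ u, 0 ≤ E u) :
    edist (∫ u in (0:ℝ)..a, E u) (∫ u in (0:ℝ)..b, E u)
      ≤ ∫⁻ u in uIoc a b, ENNReal.ofReal (E u) := by
  rw [edist_comm, edist_eq_enorm_sub,
    intervalIntegral.integral_interval_sub_left (hE _ _) (hE _ _)]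
  rw [← ofReal_norm, intervalIntegral.norm_intervalIntegral_eq, ofReal_norm]
  refine (enorm_integral_le_lintegral_enorm _).trans (le_of_eq ?_)
  apply lintegral_congr
  intro u
  rw [Real.enorm_eq_ofReal (h0 u)]

lemma weak_limit_surrogate (p : ℝ) (hp : 1 < p) (E : ℕ → ℝ → ℝ)
    (hE : ∀ n, Measurable (E n)) (h0 : ∀ n u, 0 ≤ E n u) (C : ℝ≥0∞) (hC : C ≠ ⊤)
    (hEC : ∀ n, ∫⁻ u, ENNReal.ofReal (E n u ^ p) ≤ C) :
    (∀ n c d, IntervalIntegrable (E n) volume c d) ∧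
    ∃ (m : ℝ → ℝ) (Φ : ℝ → ℝ) (φ : ℕ → ℕ), Measurable m ∧ (∀ r, 0 ≤ m r) ∧
      (∫⁻ r in Icc (0:ℝ) 1, ENNReal.ofReal (m r ^ p)) ≤ C ∧ Continuous Φ ∧
      (∀ u v, 0 ≤ u → u ≤ v → v ≤ 1 → Φ v - Φ u ≤ ∫ r in u..v, m r) ∧ StrictMono φ ∧
      ∀ t, Tendsto (fun n => ∫ u in (0:ℝ)..t, E (φ n) u) atTop (nhds (Φ t)) := by
  have hp0 : 0 < p := by linarith
  obtain ⟨q, hpq⟩ : ∃ q, p.HolderConjugate q := ⟨_, Real.HolderConjugate.conjExponent hp⟩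
  have hq0 : 0 < 1 / q := by have := hpq.symm.pos; positivity
  let e : ℕ → ℝ → ℝ≥0∞ := fun n u => ENNReal.ofReal (E n u)
  have he : ∀ n, Measurable (e n) := fun n => (hE n).ennreal_ofReal
  have hep : ∀ n u, e n u ^ p = ENNReal.ofReal (E n u ^ p) := fun n u =>
    ENNReal.ofReal_rpow_of_nonneg (h0 n u) hp0.le
  have heC : ∀ n, ∫⁻ u, e n u ^ p ≤ C := fun n => by simpa only [hep] using hEC n
  let K : ℝ := (C ^ (1 / p)).toReal
  have hCp : C ^ (1 / p) ≠ ⊤ := ENNReal.rpow_ne_top_of_nonneg (by positivity) hC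
  have hK0 : 0 ≤ K := ENNReal.toReal_nonneg
  have holder : ∀ n (A : Set ℝ) (L : ℝ), 0 ≤ L → volume A ≤ ENNReal.ofReal L →
      ∫⁻ u in A, e n u ≤ ENNReal.ofReal (K * L ^ (1 / q)) := by
    intro n A L hL hA
    refine (rpow_setLIntegral_le hpq (e n) (he n) A).trans ?_
    rw [ENNReal.ofReal_mul hK0, ← ENNReal.ofReal_rpow_of_nonneg hL hq0.le, ENNReal.ofReal_toReal hCp]
    gcongr
    exact (setLIntegral_le_lintegral _ _).trans (heC n)
  have hInt : ∀ n c d, IntervalIntegrable (E n) volume c d := by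
    intro n c d
    rw [intervalIntegrable_iff]
    refine ⟨(hE n).aestronglyMeasurable, ?_⟩
    rw [hasFiniteIntegral_iff_ofReal (Eventually.of_forall (h0 n))]
    refine (holder n (uIoc c d) |d - c| (abs_nonneg _) ?_).trans_lt ENNReal.ofReal_lt_top
    rw [Real.volume_uIoc]
  refine ⟨hInt, ?_⟩
  let P : ℕ → ℝ → ℝ := fun n t => ∫ u in (0:ℝ)..t, E n u
  have hPe : ∀ n a b, edist (P n a) (P n b) ≤ ∫⁻ u in uIoc a b, e n u := fun n a b =>
    edist_intervalIntegral_le (E n) a b (hInt n) (h0 n)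
  have hPd : ∀ n a b, dist (P n a) (P n b) ≤ K * |b - a| ^ (1 / q) := by
    intro n a b
    have h := (hPe n a b).trans (holder n (uIoc a b) |b - a| (abs_nonneg _) (by rw [Real.volume_uIoc]))
    rw [edist_dist] at h
    exact (ENNReal.ofReal_le_ofReal_iff (by positivity)).1 h
  have hPc : ∀ n, Continuous (P n) := fun n =>
    intervalIntegral.continuous_primitive (hInt n) 0
  -- convergent subsequence on the rationals
  obtain ⟨x, -, φ, hφ, hx⟩ := (isCompact_univ_pi
    (fun r : ℚ => isCompact_closedBall (0:ℝ) (K * |(r:ℝ)| ^ (1 / q)))).tendsto_subseq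
    (x := fun n (r : ℚ) => P n r) (by
      intro n r _
      have := hPd n 0 r
      simp only [P, intervalIntegral.integral_same, sub_zero] at this
      rw [Metric.mem_closedBall, dist_comm]
      exact this)
  rw [tendsto_pi_nhds] at hx
  have hω : ∀ a : ℝ, Tendsto (fun b => K * |b - a| ^ (1 / q)) (nhds a) (nhds 0) := by
    intro a
    have : Continuous (fun b : ℝ => K * |b - a| ^ (1 / q)) := by
      have h1 : Continuous (fun b : ℝ => |b - a|) := by fun_prop
      exact continuous_const.mul (h1.rpow_const (fun _ => Or.inr hq0.le))
    have h2 := this.tendsto a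
    rwa [sub_self, abs_zero, Real.zero_rpow hq0.ne', mul_zero] at h2
  have hlim : ∀ t, ∃ y, Tendsto (fun n => P (φ n) t) atTop (nhds y) := by
    intro t
    apply cauchySeq_tendsto_of_complete
    rw [Metric.cauchySeq_iff]
    intro ε hε
    obtain ⟨r, hr⟩ : ∃ r : ℚ, K * |(r:ℝ) - t| ^ (1 / q) < ε / 3 := by
      have h1 := (hω t).eventually (gt_mem_nhds (show (0:ℝ) < ε / 3 by linarith))
      obtain ⟨z, hz, r, rfl⟩ := mem_closure_iff_nhds.1 (Rat.denseRange_cast (𝕜 := ℝ) t) _ h1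
      exact ⟨r, hz⟩
    obtain ⟨N, hN⟩ := Metric.cauchySeq_iff.1 (hx r).cauchySeq (ε / 3) (by linarith)
    refine ⟨N, fun m hm n hn => ?_⟩
    have h1 := hPd (φ m) t r
    have h2 := hPd (φ n) t r
    have h3 := hN m hm n hn
    simp only [Function.comp] at h3
    have h4 := dist_triangle4 (P (φ m) t) (P (φ m) r) (P (φ n) r) (P (φ n) t)
    rw [dist_comm (P (φ n) r)] at h4
    linarith
  choose Φ hΦ using hlim
  have hΦd : ∀ a b, dist (Φ a) (Φ b) ≤ K * |b - a| ^ (1 / q) := fun a b =>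
    le_of_tendsto ((hΦ a).dist (hΦ b)) (Eventually.of_forall fun n => hPd _ a b)
  have hΦc : Continuous Φ := by
    rw [continuous_iff_continuousAt]
    intro a
    rw [ContinuousAt, tendsto_iff_dist_tendsto_zero]
    refine squeeze_zero (fun _ => dist_nonneg) (fun b => ?_) (hω a)
    rw [dist_comm]; exact hΦd a b
  have hAC : AbsolutelyContinuousOnInterval Φ 0 1 := by
    have hbound : ∀ F : ℕ × (ℕ → ℝ × ℝ), F ∈ AbsolutelyContinuousOnInterval.disjWithin 0 1 →
        ∑ i ∈ Finset.range F.1, dist (Φ (F.2 i).1) (Φ (F.2 i).2)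
          ≤ K * (∑ i ∈ Finset.range F.1, dist (F.2 i).1 (F.2 i).2) ^ (1 / q) := by
      intro F hF
      refine le_of_tendsto (tendsto_finsetSum _ fun i _ => (hΦ (F.2 i).1).dist (hΦ (F.2 i).2))
        (Eventually.of_forall fun n => ?_)
      have hs0 : 0 ≤ ∑ i ∈ Finset.range F.1, dist (F.2 i).1 (F.2 i).2 :=
        Finset.sum_nonneg fun _ _ => dist_nonneg
      rw [← ENNReal.ofReal_le_ofReal_iff (by positivity),
        ENNReal.ofReal_sum_of_nonneg (fun _ _ => dist_nonneg)]
      calc ∑ i ∈ Finset.range F.1, ENNReal.ofReal (dist (P (φ n) (F.2 i).1) (P (φ n) (F.2 i).2))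
          ≤ ∑ i ∈ Finset.range F.1, ∫⁻ u in uIoc (F.2 i).1 (F.2 i).2, e (φ n) u := by
            refine Finset.sum_le_sum fun i _ => ?_
            rw [← edist_dist]; exact hPe _ _ _
        _ = ∫⁻ u in ⋃ i ∈ Finset.range F.1, uIoc (F.2 i).1 (F.2 i).2, e (φ n) u :=
            (lintegral_biUnion_finset hF.2 (fun _ _ => measurableSet_uIoc) _).symm
        _ ≤ _ := by
            refine holder _ _ _ hs0 ((measure_biUnion_finset_le _ _).trans ?_)
            rw [ENNReal.ofReal_sum_of_nonneg (fun _ _ => dist_nonneg)]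
            refine Finset.sum_le_sum fun i _ => ?_
            rw [Real.volume_uIoc, Real.dist_eq, abs_sub_comm]
    refine tendsto_of_tendsto_of_tendsto_of_le_of_le' tendsto_const_nhds
      (h := fun F => K * (∑ i ∈ Finset.range F.1, dist (F.2 i).1 (F.2 i).2) ^ (1 / q)) ?_
      (Eventually.of_forall fun F => Finset.sum_nonneg fun _ _ => dist_nonneg)
      (eventually_inf_principal.2 (Eventually.of_forall hbound))
    have h1 : Tendsto (fun s : ℝ => K * s ^ (1 / q)) (nhds 0) (nhds 0) := by
      have h : Continuous (fun s : ℝ => K * s ^ (1 / q)) := continuous_const.mul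
        (Real.continuous_rpow_const hq0.le : Continuous fun s : ℝ => s ^ (1 / q))
      have h2 := h.tendsto 0
      rwa [Real.zero_rpow hq0.ne', mul_zero] at h2
    exact h1.comp (tendsto_comap.mono_left inf_le_left)
  -- energy bounds
  have hen : ∀ n (δ : ℝ), 0 < δ →
      ∫⁻ u, ENNReal.ofReal ((dist (P n u) (P n (u + δ)) / δ) ^ p) ≤ C := by
    intro n δ hδ
    have hδ' : ENNReal.ofReal δ ≠ 0 := by simpa using hδ
    calc ∫⁻ u, ENNReal.ofReal ((dist (P n u) (P n (u + δ)) / δ) ^ p)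
        ≤ ∫⁻ u, (ENNReal.ofReal δ)⁻¹ * ∫⁻ x in Ioc u (u + δ), e n x ^ p := by
          apply lintegral_mono
          intro u
          have h1 := hPe n u (u + δ)
          rw [uIoc_of_le (by linarith)] at h1
          have h2 := h1.trans (rpow_setLIntegral_le hpq (e n) (he n) (Ioc u (u + δ)))
          rw [Real.volume_Ioc, add_sub_cancel_left] at h2
          have h3 := ENNReal.rpow_le_rpow h2 hp0.le
          rw [ENNReal.mul_rpow_of_nonneg _ _ hp0.le, ← ENNReal.rpow_mul, ← ENNReal.rpow_mul,
            one_div_mul_cancel hp0.ne', ENNReal.rpow_one] at h3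
          have hpq' : 1 / q * p = p - 1 := by
            have := hpq.one_sub_inv
            rw [one_div, ← this]; field_simp
          rw [hpq'] at h3
          show ENNReal.ofReal ((dist (P n u) (P n (u + δ)) / δ) ^ p) ≤ _
          rw [← ENNReal.ofReal_rpow_of_nonneg (by positivity) hp0.le,
            ENNReal.ofReal_div_of_pos hδ, ← edist_dist, ENNReal.div_rpow_of_nonneg _ _ hp0.le]
          rw [ENNReal.div_le_iff_le_mul (Or.inl (by simp [hδ])) (Or.inl (by simp [hp0.le]))]
          refine h3.trans (le_of_eq ?_)
          rw [ENNReal.rpow_sub _ _ hδ' ENNReal.ofReal_ne_top, ENNReal.rpow_one, div_eq_mul_inv]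
          ring
      _ = (ENNReal.ofReal δ)⁻¹ * (ENNReal.ofReal δ * ∫⁻ x, e n x ^ p) := by
          rw [lintegral_const_mul', lintegral_window ((he n).pow_const p)]
          simpa using hδ
      _ ≤ C := by
          rw [← mul_assoc, ENNReal.inv_mul_cancel hδ' ENNReal.ofReal_ne_top, one_mul]
          exact heC n
  have hen2 : ∀ (δ : ℝ), 0 < δ →
      ∫⁻ u, ENNReal.ofReal ((dist (Φ u) (Φ (u + δ)) / δ) ^ p) ≤ C := by
    intro δ hδ
    refine lintegral_le_of_tendsto_of_le
      (F := fun n u => ENNReal.ofReal ((dist (P (φ n) u) (P (φ n) (u + δ)) / δ) ^ p)) ?_ ?_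
      (fun n => hen _ δ hδ)
    · intro n
      have := (hPc (φ n)).measurable
      have h2 : Measurable fun u => P (φ n) (u + δ) := this.comp (measurable_add_const δ)
      exact (((this.dist h2).div_const δ).pow_const p).ennreal_ofReal
    · refine Eventually.of_forall fun u => ?_
      refine ENNReal.tendsto_ofReal ?_
      exact (((hΦ u).dist (hΦ (u + δ))).div_const δ).rpow_const (Or.inr hp0.le)
  refine ⟨fun r => |deriv Φ r|, Φ, φ, (measurable_deriv Φ).abs, fun r => abs_nonneg _, ?_, hΦc, ?_,
    hφ, hΦ⟩
  · refine lintegral_le_of_tendsto_of_le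
      (F := fun (k : ℕ) u => ENNReal.ofReal
        ((dist (Φ u) (Φ (u + 1 / ((k:ℝ) + 1))) / (1 / ((k:ℝ) + 1))) ^ p)) ?_ ?_
      (fun k => (setLIntegral_le_lintegral _ _).trans (hen2 _ (by positivity)))
    · intro k
      have := hΦc.measurable
      have h2 : Measurable fun u => Φ (u + 1 / ((k:ℝ) + 1)) := this.comp (measurable_add_const _)
      exact (((this.dist h2).div_const _).pow_const p).ennreal_ofReal
    · have h := hAC.ae_differentiableAt
      rw [uIcc_of_le zero_le_one, ← ae_restrict_iff' measurableSet_Icc] at h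
      filter_upwards [h] with u hu
      refine ENNReal.tendsto_ofReal (Tendsto.rpow_const ?_ (Or.inr hp0.le))
      have h1 := hu.hasDerivAt.tendsto_slope_zero
      have h2 : Tendsto (fun k : ℕ => 1 / ((k:ℝ) + 1)) atTop (nhdsWithin 0 {0}ᶜ) := by
        refine tendsto_nhdsWithin_iff.2 ⟨tendsto_one_div_add_atTop_nhds_zero_nat, ?_⟩
        refine Eventually.of_forall fun k => ?_
        have : (0:ℝ) < 1 / ((k:ℝ) + 1) := by positivity
        exact this.ne'
      have h3 := (h1.comp h2).abs
      refine h3.congr fun k => ?_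
      have h4 : (0:ℝ) < 1 / ((k:ℝ) + 1) := by positivity
      simp only [Function.comp, smul_eq_mul]
      rw [abs_mul, abs_of_pos (inv_pos.2 h4), dist_comm, Real.dist_eq, inv_mul_eq_div]
  · intro u v hu huv hv
    have hac : AbsolutelyContinuousOnInterval Φ u v := hAC.mono (by
      rw [uIcc_of_le huv, uIcc_of_le zero_le_one]; exact Icc_subset_Icc hu hv)
    rw [← hac.integral_deriv_eq_sub]
    have hi := hac.intervalIntegrable_deriv
    exact intervalIntegral.integral_mono_on huv hi hi.abs fun x _ => le_abs_self _

/-- A Borel function `f : [0,1] → Y` with finite `p`-th moment and finite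
Sobolev `W^{1,p}` energy admits an `AC^p` (in particular continuous) representative. -/
theorem sobolev_has_acp_representative {Y : Type*} [MetricSpace Y] [CompleteSpace Y]
    [MeasurableSpace Y] [BorelSpace Y]
    (p : ℝ) (hp : 1 < p) (f : ℝ → Y) (hf : Measurable f)
    (y₀ : Y)
    (hint : ∫⁻ u in Icc (0:ℝ) 1, ENNReal.ofReal (dist (f u) y₀ ^ p) < ⊤)
    (hsob : (⨆ (h : ℝ) (_ : 0 < h) (_ : h < 1),
      ∫⁻ u in Icc (0:ℝ) (1 - h),
        ENNReal.ofReal ((dist (f (u + h)) (f u) / h) ^ p)) < ⊤) :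
    ∃ g : ℝ → Y,
      (∃ m : ℝ → ℝ, Measurable m ∧ (∀ r ∈ Icc (0:ℝ) 1, 0 ≤ m r) ∧
        (∫⁻ r in Icc (0:ℝ) 1, ENNReal.ofReal (m r ^ p)) < ⊤ ∧
        ∀ u v : ℝ, 0 ≤ u → u ≤ v → v ≤ 1 → dist (g u) (g v) ≤ ∫ r in u..v, m r) ∧
      ContinuousOn g (Icc (0:ℝ) 1) ∧
      (∀ᵐ u ∂(volume.restrict (Icc (0:ℝ) 1)), f u = g u) := by
  have hp0 : 0 < p := by linarith
  have hsep := isSeparable_range_of_measurable f hf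
  have hfs : StronglyMeasurable f := stronglyMeasurable_iff_measurable_separable.2 ⟨hf, hsep⟩
  set C := ⨆ (h : ℝ) (_ : 0 < h) (_ : h < 1),
      ∫⁻ u in Icc (0:ℝ) (1 - h), ENNReal.ofReal ((dist (f (u + h)) (f u) / h) ^ p) with hCdef
  let h : ℕ → ℝ := fun n => 1 / ((n:ℝ) + 2)
  have hpos : ∀ n, 0 < h n := fun n => by simp only [h]; positivity
  have hlt : ∀ n, h n < 1 := fun n => by
    simp only [h]
    rw [div_lt_one (by positivity)]
    have : (0:ℝ) ≤ n := Nat.cast_nonneg n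
    linarith
  have hh0 : Tendsto h atTop (nhds 0) := by
    have h1 := (tendsto_one_div_add_atTop_nhds_zero_nat (𝕜 := ℝ)).comp (tendsto_add_atTop_nat 1)
    refine h1.congr fun n => ?_
    simp only [h, Function.comp]
    push_cast
    ring_nf
  let E : ℕ → ℝ → ℝ := fun n => (Icc (0:ℝ) (1 - h n)).indicator
    (fun u => dist (f (u + h n)) (f u) / h n)
  have hEm : ∀ n, Measurable (E n) := by
    intro n
    refine Measurable.indicator ?_ measurableSet_Icc
    have h2 : StronglyMeasurable fun u => f (u + h n) :=
      hfs.comp_measurable (measurable_add_const _)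
    exact (h2.dist hfs).measurable.div_const _
  have hE0 : ∀ n u, 0 ≤ E n u := fun n u =>
    indicator_nonneg (fun u _ => div_nonneg dist_nonneg (hpos n).le) u
  have hEC : ∀ n, ∫⁻ u, ENNReal.ofReal (E n u ^ p) ≤ C := by
    intro n
    have h1 : ∀ u, ENNReal.ofReal (E n u ^ p) = (Icc (0:ℝ) (1 - h n)).indicator
        (fun u => ENNReal.ofReal ((dist (f (u + h n)) (f u) / h n) ^ p)) u := by
      intro u
      by_cases hu : u ∈ Icc (0:ℝ) (1 - h n)
      · simp only [E, indicator_of_mem hu]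
      · simp only [E, indicator_of_notMem hu, Real.zero_rpow hp0.ne', ENNReal.ofReal_zero]
    simp_rw [h1]
    rw [lintegral_indicator measurableSet_Icc]
    exact le_iSup_of_le (h n) (le_iSup_of_le (hpos n) (le_iSup_of_le (hlt n) le_rfl))
  obtain ⟨hEint, m, Φ, φ, hm, hm0, hmC, hΦc, hΦm, hφ, hΦ⟩ :=
    weak_limit_surrogate p hp E hEm hE0 C hsob.ne hEC
  obtain ⟨t, htc, ht⟩ := hsep
  let ψ : Y → ℝ → ℝ := fun y u => dist (f u) y
  have hψ : ∀ y, IntegrableOn (ψ y) (Icc 0 1) volume := by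
    intro y
    have hm1 : Measurable (ψ y₀) := (hfs.dist stronglyMeasurable_const).measurable
    have hmy : StronglyMeasurable (ψ y) := hfs.dist stronglyMeasurable_const
    have h1 : IntegrableOn (fun u => ψ y₀ u ^ p) (Icc 0 1) volume := by
      refine ⟨(hm1.pow_const p).aestronglyMeasurable, ?_⟩
      rw [hasFiniteIntegral_iff_ofReal
        (Eventually.of_forall fun u => Real.rpow_nonneg dist_nonneg p)]
      exact hint
    have h2 : IntegrableOn (fun _ : ℝ => (1 + dist y₀ y : ℝ)) (Icc 0 1) volume :=
      integrableOn_const (by simp)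
    refine Integrable.mono' (h1.add h2) hmy.aestronglyMeasurable (Eventually.of_forall fun u => ?_)
    have h3 : dist (f u) y₀ ≤ dist (f u) y₀ ^ p + 1 := by
      by_cases hc : dist (f u) y₀ ≤ 1
      · have := Real.rpow_nonneg (dist_nonneg (x := f u) (y := y₀)) p
        linarith
      · have := Real.self_le_rpow_of_one_le (not_le.1 hc).le hp.le
        linarith
    have h4 := dist_triangle (f u) y₀ y
    simp only [ψ, Real.norm_eq_abs, abs_of_nonneg dist_nonneg, Pi.add_apply]
    linarith
  have hψi : ∀ y c d, c ∈ Icc (0:ℝ) 1 → d ∈ Icc (0:ℝ) 1 → IntervalIntegrable (ψ y) volume c d := by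
    intro y c d hc hd
    rw [intervalIntegrable_iff]
    refine (hψ y).mono_set ?_
    exact uIoc_subset_uIcc.trans (uIcc_subset_Icc hc hd)
  -- comparison inequality
  have comp : ∀ y a b, 0 < a → a ≤ b → b < 1 →
      HasDerivAt (fun x => ∫ s in (0:ℝ)..x, ψ y s) (ψ y a) a →
      HasDerivAt (fun x => ∫ s in (0:ℝ)..x, ψ y s) (ψ y b) b →
      |ψ y b - ψ y a| ≤ Φ b - Φ a := by
    intro y a b ha hab hb hda hdb
    let J : ℝ → ℝ := fun x => ∫ s in (0:ℝ)..x, ψ y s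
    have hseq : Tendsto (fun n => h (φ n)) atTop (nhdsWithin 0 {0}ᶜ) := by
      refine tendsto_nhdsWithin_iff.2 ⟨hh0.comp hφ.tendsto_atTop, ?_⟩
      exact Eventually.of_forall fun n => (hpos _).ne'
    have hA := hda.tendsto_slope_zero.comp hseq
    have hB := hdb.tendsto_slope_zero.comp hseq
    refine le_of_tendsto_of_tendsto (hB.sub hA).abs ((hΦ b).sub (hΦ a)) ?_
    have hev := (hh0.comp hφ.tendsto_atTop).eventually
      (gt_mem_nhds (show (0:ℝ) < 1 - b by linarith))
    filter_upwards [hev] with n hn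
    simp only [Function.comp] at hn
    simp only [Function.comp, smul_eq_mul]
    have hk := hpos (φ n)
    set k := h (φ n) with hkdef
    have I0 : (0:ℝ) ∈ Icc (0:ℝ) 1 := ⟨le_rfl, zero_le_one⟩
    have Ia : a ∈ Icc (0:ℝ) 1 := ⟨by linarith, by linarith⟩
    have Ib : b ∈ Icc (0:ℝ) 1 := ⟨by linarith, by linarith⟩
    have Iak : a + k ∈ Icc (0:ℝ) 1 := ⟨by linarith, by linarith⟩
    have Ibk : b + k ∈ Icc (0:ℝ) 1 := ⟨by linarith, by linarith⟩
    have e1 : ∫ u in a..b, ψ y (u + k) = J (b + k) - J (a + k) := by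
      rw [intervalIntegral.integral_comp_add_right (fun u => ψ y u) k,
        intervalIntegral.integral_interval_sub_left (hψi y _ _ I0 Ibk) (hψi y _ _ I0 Iak)]
    have e2 : ∫ u in a..b, ψ y u = J b - J a :=
      (intervalIntegral.integral_interval_sub_left (hψi y _ _ I0 Ib) (hψi y _ _ I0 Ia)).symm
    have i1 : IntervalIntegrable (fun u => ψ y (u + k)) volume a b := by
      have := (hψi y _ _ Iak Ibk).comp_add_right k
      simpa using this
    have e3 : ∫ u in a..b, (ψ y (u + k) - ψ y u) = (J (b + k) - J b) - (J (a + k) - J a) := by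
      rw [intervalIntegral.integral_sub i1 (hψi y _ _ Ia Ib), e1, e2]; ring
    have e4 : |∫ u in a..b, (ψ y (u + k) - ψ y u)| ≤ ∫ u in a..b, k * E (φ n) u := by
      rw [← Real.norm_eq_abs]
      refine intervalIntegral.norm_integral_le_of_norm_le hab (Eventually.of_forall fun u hu => ?_)
        ((hEint (φ n) a b).const_mul k)
      have hu' : u ∈ Icc (0:ℝ) (1 - h (φ n)) := ⟨by linarith [hu.1], by linarith [hu.2]⟩
      simp only [E, indicator_of_mem hu', ψ]
      rw [← hkdef, mul_div_cancel₀ _ hk.ne', Real.norm_eq_abs]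
      exact abs_dist_sub_le _ _ _
    rw [e3, intervalIntegral.integral_const_mul] at e4
    rw [intervalIntegral.integral_interval_sub_left (hEint _ _ _) (hEint _ _ _), ← mul_sub,
      abs_mul, abs_of_pos (inv_pos.2 hk), inv_mul_le_iff₀ hk]
    exact e4
  -- good set
  let S : Set ℝ := {a | a ∈ Ioo (0:ℝ) 1 ∧ ∀ y ∈ t,
    HasDerivAt (fun x => ∫ s in (0:ℝ)..x, ψ y s) (ψ y a) a}
  have hSae : ∀ᵐ u ∂(volume.restrict (Icc (0:ℝ) 1)), u ∈ S := by
    rw [← restrict_Ioo_eq_restrict_Icc, ae_restrict_iff' measurableSet_Ioo]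
    have h1 : ∀ᵐ u, ∀ y ∈ t, u ∈ uIcc (0:ℝ) 1 → ∀ c ∈ uIcc (0:ℝ) 1,
        HasDerivAt (fun x => ∫ s in c..x, ψ y s) (ψ y u) u := by
      rw [ae_ball_iff htc]
      intro y _
      exact (hψi y 0 1 ⟨le_rfl, zero_le_one⟩ ⟨zero_le_one, le_rfl⟩).ae_hasDerivAt_integral
    filter_upwards [h1] with u hu hu'
    refine ⟨hu', fun y hy => hu y hy ?_ 0 left_mem_uIcc⟩
    rw [uIcc_of_le zero_le_one]; exact Ioo_subset_Icc_self hu'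
  have hSd : ∀ a ∈ S, ∀ b ∈ S, dist (f a) (f b) ≤ |Φ b - Φ a| := by
    have main : ∀ a ∈ S, ∀ b ∈ S, a ≤ b → dist (f a) (f b) ≤ |Φ b - Φ a| := by
      intro a ha b hb hab
      have hcl : IsClosed {y | |dist (f b) y - dist (f a) y| ≤ |Φ b - Φ a|} :=
        isClosed_le (by fun_prop) continuous_const
      have hsub : t ⊆ {y | |dist (f b) y - dist (f a) y| ≤ |Φ b - Φ a|} := fun y hy =>
        (comp y a b ha.1.1 hab hb.1.2 (ha.2 y hy) (hb.2 y hy)).trans (le_abs_self _)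
      have := closure_minimal hsub hcl (ht (mem_range_self a))
      simpa [dist_comm] using this
    intro a ha b hb
    rcases le_total a b with hab | hab
    · exact main a ha b hb hab
    · rw [dist_comm, abs_sub_comm]; exact main b hb a ha hab
  have hSdense : ∀ u ∈ Icc (0:ℝ) 1, u ∈ closure S := by
    have h1 : Ioo (0:ℝ) 1 ⊆ closure S := by
      intro u hu
      rw [mem_closure_iff_nhds]
      intro V hV
      by_contra hne
      rw [not_nonempty_iff_eq_empty] at hne
      have hW : V ∩ Ioo (0:ℝ) 1 ∈ nhds u := inter_mem hV (isOpen_Ioo.mem_nhds hu)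
      have hpos' := Measure.measure_pos_of_mem_nhds volume hW
      have h0 : volume (V ∩ Ioo (0:ℝ) 1) = 0 := by
        refine measure_mono_null ?_ ((ae_restrict_iff' measurableSet_Icc).1 hSae)
        intro x hx hx2
        have hxS : x ∈ S := hx2 (Ioo_subset_Icc_self hx.2)
        have : x ∈ V ∩ S := ⟨hx.1, hxS⟩
        rw [hne] at this
        exact this
      exact hpos'.ne' h0
    have h2 := closure_minimal h1 isClosed_closure
    rwa [closure_Ioo zero_ne_one] at h2
  have hext : ∀ u, ∃ z : Y, u ∈ Icc (0:ℝ) 1 → ∃ s : ℕ → ℝ, (∀ n, s n ∈ S) ∧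
      Tendsto s atTop (nhds u) ∧ Tendsto (fun n => f (s n)) atTop (nhds z) := by
    intro u
    by_cases hu : u ∈ Icc (0:ℝ) 1
    swap
    · exact ⟨y₀, fun h => absurd h hu⟩
    obtain ⟨s, hs, hsu⟩ := mem_closure_iff_seq_limit.1 (hSdense u hu)
    have hcau : CauchySeq fun n => f (s n) := by
      have h1 : CauchySeq fun n => Φ (s n) := ((hΦc.tendsto u).comp hsu).cauchySeq
      rw [Metric.cauchySeq_iff] at h1 ⊢
      intro ε hε
      obtain ⟨N, hN⟩ := h1 ε hε
      refine ⟨N, fun i hi j hj => (hSd _ (hs i) _ (hs j)).trans_lt ?_⟩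
      have := hN j hj i hi
      rwa [Real.dist_eq] at this
    obtain ⟨z, hz⟩ := cauchySeq_tendsto_of_complete hcau
    exact ⟨z, fun _ => ⟨s, hs, hsu, hz⟩⟩
  choose g hg using hext
  have hgd : ∀ u ∈ Icc (0:ℝ) 1, ∀ v ∈ Icc (0:ℝ) 1, dist (g u) (g v) ≤ |Φ v - Φ u| := by
    intro u hu v hv
    obtain ⟨s, hs, hsu, hsz⟩ := hg u hu
    obtain ⟨r, hr, hrv, hrz⟩ := hg v hv
    exact le_of_tendsto_of_tendsto' (hsz.dist hrz)
      ((((hΦc.tendsto v).comp hrv).sub ((hΦc.tendsto u).comp hsu)).abs)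
      fun n => hSd _ (hs n) _ (hr n)
  have hΦmono : ∀ u v, u ≤ v → Φ u ≤ Φ v := by
    intro u v huv
    refine le_of_tendsto_of_tendsto' (hΦ u) (hΦ v) fun n => ?_
    rw [← sub_nonneg, intervalIntegral.integral_interval_sub_left (hEint _ _ _) (hEint _ _ _)]
    exact intervalIntegral.integral_nonneg huv fun x _ => hE0 _ x
  refine ⟨g, ⟨m, hm, fun r _ => hm0 r, hmC.trans_lt hsob, ?_⟩, ?_, ?_⟩
  · intro u v hu huv hv
    have h1 := hgd u ⟨hu, huv.trans hv⟩ v ⟨hu.trans huv, hv⟩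
    rw [abs_of_nonneg (sub_nonneg.2 (hΦmono u v huv))] at h1
    exact h1.trans (hΦm u v hu huv hv)
  · intro u hu
    rw [ContinuousWithinAt, tendsto_iff_dist_tendsto_zero]
    have h1 : Tendsto (fun v => |Φ u - Φ v|) (nhdsWithin u (Icc 0 1)) (nhds 0) := by
      have : Continuous fun v => |Φ u - Φ v| := (continuous_const.sub hΦc).abs
      have h2 := this.tendsto u
      rw [sub_self, abs_zero] at h2
      exact h2.mono_left nhdsWithin_le_nhds
    refine squeeze_zero' (Eventually.of_forall fun _ => dist_nonneg) ?_ h1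
    filter_upwards [self_mem_nhdsWithin] with v hv
    exact hgd v hv u hu
  · filter_upwards [hSae] with u hu
    obtain ⟨s, hs, hsu, hsz⟩ := hg u (Ioo_subset_Icc_self hu.1)
    refine tendsto_nhds_unique ?_ hsz
    rw [tendsto_iff_dist_tendsto_zero]
    have h1 : Tendsto (fun n => |Φ u - Φ (s n)|) atTop (nhds 0) := by
      have : Continuous fun v => |Φ u - Φ v| := (continuous_const.sub hΦc).abs
      have h2 := this.tendsto u
      rw [sub_self, abs_zero] at h2
      exact h2.comp hsu
    exact squeeze_zero (fun _ => dist_nonneg) (fun n => hSd _ (hs n) _ hu) h1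
end

section
/- Let (Y,d) be a metric space, p ∈ [1,∞), N ∈ ℕ with N ≥ 1, and for a Borel-measurable function f : [0,1] → Y define g_N(f) := sup_{h ∈ [1/2^N, 1)} ∫_0^{1−h} d(f(u+h),f(u))^p / h^p du ∈ [0,∞]. Then for all Borel-measurable p-integrable f, g : [0,1] → Y, one has g_N(f)^{1/p} ≤ g_N(g)^{1/p} + 2^{N+1} · ( ∫_0^1 d(f(u),g(u))^p du )^{1/p}. In particular, g_N is lower semicontinuous with respect to the pseudometric d_{L^p}. -/
open MeasureTheory Set Filter
open scoped ENNReal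

/-- The truncated Sobolev energy `g_N(f) = sup_{h ∈ [1/2^N,1)} ∫_0^{1-h} d(f(u+h),f(u))^p/h^p du`. -/
noncomputable def truncSobolevEnergy {Y : Type*} [MetricSpace Y] (p : ℝ) (N : ℕ)
    (f : ℝ → Y) : ℝ≥0∞ :=
  ⨆ (h : ℝ) (_ : 1 / 2 ^ N ≤ h) (_ : h < 1),
    ∫⁻ u in Icc (0:ℝ) (1 - h), ENNReal.ofReal (dist (f (u + h)) (f u) ^ p / h ^ p)

theorem aux_condensation {X : Type*} [TopologicalSpace X] [SecondCountableTopology X]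
    {S : Set X} (hS : ¬ S.Countable) :
    ∃ x ∈ S, ∃ y ∈ S, x ≠ y ∧ (∀ U ∈ nhds x, ¬ (U ∩ S).Countable) ∧
      (∀ U ∈ nhds y, ¬ (U ∩ S).Countable) := by
  set T : Set X := {x ∈ S | ∃ U ∈ nhds x, (U ∩ S).Countable} with hT
  have hTc : T.Countable := by
    have h1 : ∀ x : X, ∃ U : Set X, x ∈ T → U ∈ nhds x ∧ (U ∩ S).Countable := by
      intro x
      by_cases hx : x ∈ T
      · obtain ⟨-, U, hU, hc⟩ := hx
        exact ⟨U, fun _ => ⟨hU, hc⟩⟩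
      · exact ⟨univ, fun h => absurd h hx⟩
    choose U hU using h1
    obtain ⟨t, htT, htc, hcov⟩ := TopologicalSpace.countable_cover_nhdsWithin
      (s := T) (f := U) (fun x hx => mem_nhdsWithin_of_mem_nhds (hU x hx).1)
    have : T ⊆ ⋃ x ∈ t, (U x ∩ S) := by
      intro x hx
      have := hcov hx
      simp only [mem_iUnion] at this ⊢
      obtain ⟨i, hi, hxi⟩ := this
      exact ⟨i, hi, hxi, hx.1⟩
    exact (htc.biUnion (fun x hx => (hU x (htT hx)).2)).mono this
  have hd : ¬ (S \ T).Countable := fun h => hS ((h.union hTc).mono (by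
    intro x hx
    by_cases h : x ∈ T
    · exact Or.inr h
    · exact Or.inl ⟨hx, h⟩))
  have hn : (S \ T).Nontrivial := by
    by_contra h
    exact hd (Set.not_nontrivial_iff.1 h).countable
  obtain ⟨x, hx, y, hy, hxy⟩ := hn
  exact ⟨x, hx.1, y, hy.1, hxy, fun U hU hc => hx.2 ⟨hx.1, U, hU, hc⟩,
    fun U hU hc => hy.2 ⟨hy.1, U, hU, hc⟩⟩

theorem aux_splitting {X Z : Type*} [MetricSpace X] [SecondCountableTopology X]
    [MetricSpace Z] {φ : X → Z} (hφ : Continuous φ) {R : Set X} (hR : InjOn φ R)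
    {C : Set X} (hC : IsClosed C) (hunc : ¬ (C ∩ R).Countable) {ε : ℝ≥0∞} (hε : 0 < ε) :
    ∃ C₀ C₁ : Set X, (IsClosed C₀ ∧ ¬ (C₀ ∩ R).Countable ∧ C₀ ⊆ C ∧ Metric.ediam C₀ ≤ ε) ∧
      (IsClosed C₁ ∧ ¬ (C₁ ∩ R).Countable ∧ C₁ ⊆ C ∧ Metric.ediam C₁ ≤ ε) ∧
      Disjoint (φ '' C₀) (φ '' C₁) := by
  obtain ⟨x, hx, y, hy, hxy, hxc, hyc⟩ := aux_condensation hunc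
  have hne : φ x ≠ φ y := fun h => hxy (hR hx.2 hy.2 h)
  have hδ : 0 < dist (φ x) (φ y) := dist_pos.2 hne
  set δ := dist (φ x) (φ y) with hδd
  have key : ∀ z : X, (∀ U ∈ nhds z, ¬ (U ∩ (C ∩ R)).Countable) →
      ∃ C₀ : Set X, (IsClosed C₀ ∧ ¬ (C₀ ∩ R).Countable ∧ C₀ ⊆ C ∧ Metric.ediam C₀ ≤ ε) ∧
        φ '' C₀ ⊆ Metric.closedBall (φ z) (δ / 3) := by
    intro z hz
    refine ⟨C ∩ (Metric.closedEBall z (ε / 2) ∩ φ ⁻¹' (Metric.closedBall (φ z) (δ / 3))),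
      ⟨?_, ?_, inter_subset_left, ?_⟩, ?_⟩
    · exact hC.inter (Metric.isClosed_closedEBall.inter (Metric.isClosed_closedBall.preimage hφ))
    · have := hz (Metric.closedEBall z (ε / 2) ∩ φ ⁻¹' (Metric.closedBall (φ z) (δ / 3)))
        (inter_mem (Metric.closedEBall_mem_nhds z (ENNReal.half_pos hε.ne'))
          (hφ.continuousAt.preimage_mem_nhds (Metric.closedBall_mem_nhds _ (by positivity))))
      intro h
      apply this
      convert h using 1
      ext w; simp only [mem_inter_iff]; tauto
    · refine (Metric.ediam_mono (inter_subset_right.trans inter_subset_left)).trans ?_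
      refine Metric.ediam_closedEBall_le.trans ?_
      rw [ENNReal.mul_div_cancel (by simp) (by simp)]
    · rintro _ ⟨w, hw, rfl⟩
      exact hw.2.2
  obtain ⟨C₀, h0, h0'⟩ := key x hxc
  obtain ⟨C₁, h1, h1'⟩ := key y hyc
  refine ⟨C₀, C₁, h0, h1, ?_⟩
  refine Disjoint.mono h0' h1' ?_
  apply Metric.closedBall_disjoint_closedBall
  rw [← hδd]; linarith

open CantorScheme in
theorem aux_cantor {X Z : Type*} [MetricSpace X] [SecondCountableTopology X] [CompleteSpace X]
    [MetricSpace Z] {φ : X → Z} (hφ : Continuous φ) {R : Set X} (hR : InjOn φ R)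
    (hunc : ¬ R.Countable) :
    ∃ f : (ℕ → Bool) → X, Function.Injective (φ ∘ f) := by
  obtain ⟨u, -, upos', hu⟩ := exists_seq_strictAnti_tendsto' (zero_lt_one' ℝ≥0∞)
  have upos := fun n => (upos' n).1
  let P := Subtype fun E : Set X => IsClosed E ∧ ¬ (E ∩ R).Countable
  choose C0 C1 h0 h1 hdisj using
    fun {C : Set X} (hC : IsClosed C) (hn : ¬ (C ∩ R).Countable) {ε : ℝ≥0∞} (hε : 0 < ε) =>
    aux_splitting hφ hR hC hn hε
  let DP : List Bool → P := fun l => by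
    induction l with
    | nil => exact ⟨univ, ⟨isClosed_univ, by simpa using hunc⟩⟩
    | cons a l ih =>
      cases a
      · use C0 ih.property.1 ih.property.2 (upos (l.length + 1))
        exact ⟨(h0 _ _ _).1, (h0 _ _ _).2.1⟩
      use C1 ih.property.1 ih.property.2 (upos (l.length + 1))
      exact ⟨(h1 _ _ _).1, (h1 _ _ _).2.1⟩
  let D : List Bool → Set X := fun l => (DP l).val
  have hanti : ClosureAntitone D := by
    refine Antitone.closureAntitone ?_ fun l => (DP l).property.1
    intro l a
    cases a
    · exact (h0 _ _ _).2.2.1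
    exact (h1 _ _ _).2.2.1
  have hdiam : VanishingDiam D := by
    intro x
    apply tendsto_of_tendsto_of_tendsto_of_le_of_le' tendsto_const_nhds hu
    · simp
    rw [eventually_atTop]
    refine ⟨1, fun m (hm : 1 ≤ m) => ?_⟩
    rw [Nat.one_le_iff_ne_zero] at hm
    rcases Nat.exists_eq_succ_of_ne_zero hm with ⟨n, rfl⟩
    dsimp
    cases x n
    · convert! (h0 _ _ _).2.2.2
      rw [PiNat.res_length]
    convert! (h1 _ _ _).2.2.2
    rw [PiNat.res_length]
  have hdisj' : CantorScheme.Disjoint (fun l => φ '' D l) := by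
    rintro l (a | a) (b | b) hab <;> try contradiction
    · exact hdisj _ _ _
    exact (hdisj _ _ _).symm
  have hne : ∀ l, (D l).Nonempty := by
    intro l
    by_contra h
    rw [not_nonempty_iff_eq_empty] at h
    apply (DP l).property.2
    have : (DP l).val = ∅ := h
    rw [this]; simp
  have hdom : ∀ {x : ℕ → Bool}, x ∈ (inducedMap D).1 := fun {x} => by
    rw [hanti.map_of_vanishingDiam hdiam hne]
    apply mem_univ
  refine ⟨fun x => (inducedMap D).2 ⟨x, hdom⟩, ?_⟩
  intro x y hxy
  simp only [Function.comp] at hxy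
  apply PiNat.res_injective
  ext n : 1
  induction n with
  | zero => simp
  | succ n ih =>
    simp only [PiNat.res_succ, List.cons.injEq]
    refine ⟨?_, ih⟩
    by_contra hne'
    have := hdisj' (PiNat.res x n) hne'
    refine (Set.disjoint_left.1 this : _) (?_ : φ ((inducedMap D).2 ⟨x, hdom⟩) ∈ _) ?_
    · rw [← PiNat.res_succ]
      exact mem_image_of_mem _ (map_mem (A := D) ⟨x, hdom⟩ (n + 1))
    · rw [hxy, ih, ← PiNat.res_succ]
      exact mem_image_of_mem _ (map_mem (A := D) ⟨y, hdom⟩ (n + 1))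

theorem aux_cantor_polish {X : Type*} [TopologicalSpace X] [PolishSpace X]
    {φ : X → ℝ} (hφ : Continuous φ) (hunc : ¬ (range φ).Countable) :
    ∃ f : (ℕ → Bool) → X, Function.Injective (φ ∘ f) := by
  let := TopologicalSpace.upgradeIsCompletelyMetrizable X
  have hs : ∀ z : range φ, ∃ x, φ x = z := fun z => z.2
  choose s hs using hs
  refine aux_cantor hφ (R := range s) ?_ ?_
  · rintro _ ⟨a, rfl⟩ _ ⟨b, rfl⟩ h
    rw [hs, hs] at h
    rw [Subtype.ext h]
  · intro h
    apply hunc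
    refine (h.image φ).mono ?_
    rintro z hz
    exact ⟨s ⟨z, hz⟩, mem_range_self _, hs ⟨z, hz⟩⟩

theorem aux_countable_range {φ : ℝ → ℝ} (h : ∀ B : Set ℝ, MeasurableSet (φ ⁻¹' B)) :
    (range φ).Countable := by
  by_contra hunc
  have h4 : Cardinal.mk {s : Set ℝ // MeasurableSet s} ≤ Cardinal.continuum := by
    obtain ⟨b, hb, he⟩ :=
      MeasurableSpace.CountablyGenerated.isCountablyGenerated (α := ℝ)
    have := MeasurableSpace.cardinal_measurableSet_le_continuum (s := b)
      (hb.le_aleph0.trans Cardinal.aleph0_le_continuum)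
    rw [← he] at this
    exact this
  have hm : Measurable φ := fun B _ => h B
  obtain ⟨t', -, hc, hP⟩ := hm.exists_continuous
  obtain ⟨f, hf⟩ := @aux_cantor_polish ℝ t' hP φ hc hunc
  have hinj : Function.Injective
      (fun T : Set (ℕ → Bool) => (⟨φ ⁻¹' ((φ ∘ f) '' T), h _⟩ : {s : Set ℝ // MeasurableSet s})) := by
    intro T T' hTT
    have h1 : φ ⁻¹' ((φ ∘ f) '' T) = φ ⁻¹' ((φ ∘ f) '' T') := congrArg Subtype.val hTT
    have h2 : f ⁻¹' (φ ⁻¹' ((φ ∘ f) '' T)) = f ⁻¹' (φ ⁻¹' ((φ ∘ f) '' T')) := by rw [h1]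
    rw [← preimage_comp, ← preimage_comp, hf.preimage_image, hf.preimage_image] at h2
    exact h2
  have h3 := Cardinal.mk_le_of_injective hinj
  rw [Cardinal.mk_set] at h3
  have h5 : Cardinal.mk (ℕ → Bool) = Cardinal.continuum := by simp
  rw [h5] at h3
  exact absurd (h3.trans h4) (not_le.2 (Cardinal.cantor _))

theorem aux_separable {Y : Type*} [MetricSpace Y] [MeasurableSpace Y] [BorelSpace Y]
    {f : ℝ → Y} (hf : Measurable f) : TopologicalSpace.IsSeparable (range f) := by
  have key : ∀ ε : ℝ, 0 < ε → ∃ R : Set ℝ, R.Countable ∧ ∀ u, ∃ r ∈ R, dist (f u) (f r) < ε := by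
    intro ε hε
    obtain ⟨R, hR⟩ := zorn_subset
      {R : Set ℝ | R.Pairwise (fun r s => ε ≤ dist (f r) (f s))} (by
        intro c hc hch
        exact ⟨⋃₀ c, (pairwise_sUnion hch.directedOn).2 hc, fun s hs => subset_sUnion_of_mem hs⟩)
    have hsep : R.Pairwise (fun r s => ε ≤ dist (f r) (f s)) := hR.prop
    refine ⟨R, ?_, ?_⟩
    · classical
      let φ : ℝ → ℝ := fun u => if h : ∃ r ∈ R, dist (f u) (f r) < ε / 2 then h.choose else 0
      have huniq : ∀ u, ∀ r ∈ R, dist (f u) (f r) < ε / 2 → φ u = r := by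
        intro u r hr hd
        have h : ∃ r ∈ R, dist (f u) (f r) < ε / 2 := ⟨r, hr, hd⟩
        have e : φ u = h.choose := dif_pos h
        rw [e]
        by_contra hne
        have h1 := hsep h.choose_spec.1 hr hne
        have h2 := h.choose_spec.2
        have h3 := dist_triangle_left (f h.choose) (f r) (f u)
        linarith
      have hzero : ∀ u, (¬ ∃ r ∈ R, dist (f u) (f r) < ε / 2) → φ u = 0 := fun u h => dif_neg h
      have hO : ∀ B : Set ℝ, MeasurableSet (f ⁻¹' (⋃ r ∈ R ∩ B, Metric.ball (f r) (ε / 2))) :=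
        fun B => hf (isOpen_biUnion fun _ _ => Metric.isOpen_ball).measurableSet
      have hmeas : ∀ B : Set ℝ, MeasurableSet (φ ⁻¹' B) := by
        intro B
        have : φ ⁻¹' B = f ⁻¹' (⋃ r ∈ R ∩ B, Metric.ball (f r) (ε / 2)) ∪
            ((f ⁻¹' (⋃ r ∈ R ∩ univ, Metric.ball (f r) (ε / 2)))ᶜ ∩ {_u | (0:ℝ) ∈ B}) := by
          ext u
          simp only [mem_preimage, mem_union, mem_iUnion, mem_inter_iff, mem_compl_iff,
            Metric.mem_ball, mem_univ, and_true, exists_prop, mem_ofPred_eq]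
          by_cases h : ∃ r ∈ R, dist (f u) (f r) < ε / 2
          · obtain ⟨r, hr, hd⟩ := h
            rw [huniq u r hr hd]
            constructor
            · intro hB
              exact Or.inl ⟨r, ⟨hr, hB⟩, hd⟩
            · rintro (⟨r', ⟨hr', hB⟩, hd'⟩ | ⟨hn, -⟩)
              · rw [← huniq u r hr hd, huniq u r' hr' hd']; exact hB
              · exact absurd ⟨r, hr, hd⟩ hn
          · rw [hzero u h]
            constructor
            · intro hB
              exact Or.inr ⟨h, hB⟩
            · rintro (⟨r', ⟨hr', hB⟩, hd'⟩ | ⟨-, hB⟩)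
              · exact absurd ⟨r', hr', hd'⟩ h
              · exact hB
        rw [this]
        exact (hO B).union ((hO univ).compl.inter (MeasurableSet.const _))
      refine (aux_countable_range hmeas).mono ?_
      intro r hr
      exact ⟨r, huniq r r hr (by simpa using hε)⟩
    · intro u
      by_contra! h
      have hu : u ∉ R := fun hu => by
        have := h u hu
        simp at this; linarith
      have hins : insert u R ∈ {R : Set ℝ | R.Pairwise (fun r s => ε ≤ dist (f r) (f s))} := by
        refine (pairwise_insert_of_notMem hu).2 ⟨hsep, fun r hr => ⟨h r hr, ?_⟩⟩
        rw [dist_comm]; exact h r hr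
      exact hu (hR.le_of_ge hins (subset_insert u R) (mem_insert u R))
  obtain ⟨t, -, htc, ht⟩ := EMetric.subset_countable_closure_of_almost_dense_set (range f) (by
    intro ε hε
    obtain ⟨δ, hδ0, hδ⟩ := ENNReal.lt_iff_exists_real_btwn.1 hε
    have hδp : 0 < δ := by simpa using hδ.1
    obtain ⟨R, hRc, hR⟩ := key δ hδp
    refine ⟨f '' R, hRc.image f, ?_⟩
    rintro _ ⟨u, rfl⟩
    obtain ⟨r, hr, hd⟩ := hR u
    refine mem_biUnion (mem_image_of_mem f hr) ?_
    rw [Metric.mem_closedEBall, edist_dist]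
    exact (ENNReal.ofReal_le_ofReal hd.le).trans hδ.2.le)
  exact ⟨t, htc, ht⟩

theorem aux_sm {Y : Type*} [MetricSpace Y] [MeasurableSpace Y] [BorelSpace Y]
    {f : ℝ → Y} (hf : Measurable f) : StronglyMeasurable f :=
  stronglyMeasurable_iff_measurable_separable.2 ⟨hf, aux_separable hf⟩

theorem aux_rpow_div {a h p : ℝ} (ha : 0 ≤ a) (hh : 0 < h) (hp : 0 ≤ p) :
    ENNReal.ofReal (a ^ p / h ^ p) = ENNReal.ofReal (a / h) ^ p := by
  rw [← Real.div_rpow ha hh.le, ENNReal.ofReal_rpow_of_nonneg (by positivity) hp]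

theorem aux_const {α : Type*} [MeasurableSpace α] (μ : Measure α) {p : ℝ} (hp : 1 ≤ p)
    {a : ℝ≥0∞} (F : α → ℝ≥0∞) (hF : Measurable F) :
    (∫⁻ u, (a * F u) ^ p ∂μ) ^ (1 / p) = a * (∫⁻ u, F u ^ p ∂μ) ^ (1 / p) := by
  have hp0 : 0 < p := by linarith
  simp_rw [ENNReal.mul_rpow_of_nonneg _ _ hp0.le]
  rw [lintegral_const_mul _ (hF.pow_const p), ENNReal.mul_rpow_of_nonneg _ _ (by positivity),
    ← ENNReal.rpow_mul, mul_one_div_cancel hp0.ne', ENNReal.rpow_one]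

theorem aux_fixed {Y : Type*} [MetricSpace Y] {p : ℝ} (hp : 1 ≤ p) {N : ℕ} {f g : ℝ → Y}
    (hf : StronglyMeasurable f) (hg : StronglyMeasurable g) {h : ℝ}
    (h1 : 1 / 2 ^ N ≤ h) (h2 : h < 1) :
    (∫⁻ u in Icc (0:ℝ) (1 - h), ENNReal.ofReal (dist (f (u + h)) (f u) ^ p / h ^ p)) ^ (1 / p)
      ≤ (∫⁻ u in Icc (0:ℝ) (1 - h), ENNReal.ofReal (dist (g (u + h)) (g u) ^ p / h ^ p)) ^ (1 / p)
        + (2 : ℝ≥0∞) ^ (N + 1) *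
            (∫⁻ u in Icc (0:ℝ) 1, ENNReal.ofReal (dist (f u) (g u) ^ p)) ^ (1/p) := by
  have hp0 : 0 < p := by linarith
  have hh : 0 < h := lt_of_lt_of_le (by positivity) h1
  have hadd : Measurable (fun u : ℝ => u + h) := measurable_id.add_const h
  have hgg : Measurable (fun u => dist (g (u + h)) (g u)) :=
    ((hg.comp_measurable hadd).dist hg).measurable
  have hfg : Measurable (fun u => dist (f u) (g u)) := (hf.dist hg).measurable
  set G : ℝ → ℝ≥0∞ := fun u => ENNReal.ofReal (dist (g (u + h)) (g u) / h) with hGdef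
  set E : ℝ → ℝ≥0∞ := fun u => ENNReal.ofReal (dist (f u) (g u)) with hEdef
  have hG : Measurable G := (hgg.div_const h).ennreal_ofReal
  have hE : Measurable E := hfg.ennreal_ofReal
  have hE' : Measurable (fun u => E (u + h)) := hE.comp hadd
  set c : ℝ≥0∞ := ENNReal.ofReal (1 / h) with hc
  have hc2 : c ≤ 2 ^ N := by
    have : 1 / h ≤ 2 ^ N := by
      rw [div_le_iff₀ hh]
      rw [div_le_iff₀ (by positivity)] at h1
      linarith
    refine (ENNReal.ofReal_le_ofReal this).trans ?_
    rw [ENNReal.ofReal_pow (by norm_num)]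
    simp
  set D := ∫⁻ u in Icc (0:ℝ) 1, ENNReal.ofReal (dist (f u) (g u) ^ p) with hD
  have hDE : D = ∫⁻ u in Icc (0:ℝ) 1, E u ^ p := by
    simp only [hD, hEdef, ENNReal.ofReal_rpow_of_nonneg dist_nonneg hp0.le]
  have hb1 : ∫⁻ u in Icc (0:ℝ) (1 - h), E u ^ p ≤ D := by
    rw [hDE]
    exact lintegral_mono_set (Icc_subset_Icc_right (by linarith))
  have hb2 : ∫⁻ u in Icc (0:ℝ) (1 - h), E (u + h) ^ p ≤ D := by
    have hmp := (measurePreserving_add_right (volume : Measure ℝ) h)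
    have := hmp.setLIntegral_comp_preimage (s := Icc h 1) measurableSet_Icc
      (f := fun u => E u ^ p) (hE.pow_const p)
    have hpre : (fun u : ℝ => u + h) ⁻¹' (Icc h 1) = Icc 0 (1 - h) := by
      simp
    rw [hpre] at this
    rw [this, hDE]
    exact lintegral_mono_set (Icc_subset_Icc_left hh.le)
  set μ := (volume : Measure ℝ).restrict (Icc (0:ℝ) (1 - h)) with hμ
  simp_rw [aux_rpow_div dist_nonneg hh hp0.le]
  have hpt : ∀ u, ENNReal.ofReal (dist (f (u + h)) (f u) / h)
      ≤ (G + (fun u => c * E (u + h)) + (fun u => c * E u)) u := by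
    intro u
    simp only [Pi.add_apply, hGdef, hEdef, hc]
    rw [← ENNReal.ofReal_mul (by positivity), ← ENNReal.ofReal_mul (by positivity),
      ← ENNReal.ofReal_add (by positivity) (by positivity),
      ← ENNReal.ofReal_add (by positivity) (by positivity)]
    apply ENNReal.ofReal_le_ofReal
    have t1 := dist_triangle4 (f (u + h)) (g (u + h)) (g u) (f u)
    rw [dist_comm (g u) (f u)] at t1
    have : dist (g (u + h)) (g u) / h + 1 / h * dist (f (u + h)) (g (u + h))
        + 1 / h * dist (f u) (g u)
        = (dist (f (u + h)) (g (u + h)) + dist (g (u + h)) (g u) + dist (f u) (g u)) / h := by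
      ring
    rw [this]
    gcongr
  have hq : 0 ≤ 1 / p := by positivity
  calc (∫⁻ u, ENNReal.ofReal (dist (f (u + h)) (f u) / h) ^ p ∂μ) ^ (1 / p)
      ≤ (∫⁻ u, ((G + (fun u => c * E (u + h)) + (fun u => c * E u)) u) ^ p ∂μ) ^ (1 / p) := by
        refine ENNReal.rpow_le_rpow (lintegral_mono fun u => ?_) hq
        exact ENNReal.rpow_le_rpow (hpt u) hp0.le
    _ ≤ (∫⁻ u, (G + (fun u => c * E (u + h))) u ^ p ∂μ) ^ (1 / p)
          + (∫⁻ u, (c * E u) ^ p ∂μ) ^ (1 / p) :=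
        ENNReal.lintegral_Lp_add_le (hG.add (hE'.const_mul c)).aemeasurable
          (hE.const_mul c).aemeasurable hp
    _ ≤ ((∫⁻ u, G u ^ p ∂μ) ^ (1 / p) + (∫⁻ u, (c * E (u + h)) ^ p ∂μ) ^ (1 / p))
          + (∫⁻ u, (c * E u) ^ p ∂μ) ^ (1 / p) := by
        gcongr
        exact ENNReal.lintegral_Lp_add_le hG.aemeasurable (hE'.const_mul c).aemeasurable hp
    _ = (∫⁻ u, G u ^ p ∂μ) ^ (1 / p) + (c * (∫⁻ u, E (u + h) ^ p ∂μ) ^ (1 / p)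
          + c * (∫⁻ u, E u ^ p ∂μ) ^ (1 / p)) := by
        rw [aux_const μ hp _ hE', aux_const μ hp _ hE, add_assoc]
    _ ≤ (∫⁻ u, G u ^ p ∂μ) ^ (1 / p) + (2 ^ N * D ^ (1 / p) + 2 ^ N * D ^ (1 / p)) := by
        gcongr
    _ = (∫⁻ u, G u ^ p ∂μ) ^ (1 / p) + 2 ^ (N + 1) * D ^ (1 / p) := by
        rw [pow_succ]; ring

theorem aux_lip {Y : Type*} [MetricSpace Y] {p : ℝ} (hp : 1 ≤ p) {N : ℕ} {f g : ℝ → Y}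
    (hf : StronglyMeasurable f) (hg : StronglyMeasurable g) :
    (truncSobolevEnergy p N f) ^ (1/p)
        ≤ (truncSobolevEnergy p N g) ^ (1/p)
          + (2 : ℝ≥0∞) ^ (N + 1) *
            (∫⁻ u in Icc (0:ℝ) 1, ENNReal.ofReal (dist (f u) (g u) ^ p)) ^ (1/p) := by
  have hp0 : 0 < p := by linarith
  rw [one_div, ENNReal.rpow_inv_le_iff hp0, ← one_div]
  refine iSup_le fun h => iSup_le fun h1 => iSup_le fun h2 => ?_
  rw [← ENNReal.rpow_inv_le_iff hp0, ← one_div]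
  refine (aux_fixed hp hf hg h1 h2).trans ?_
  gcongr
  exact le_iSup_of_le h (le_iSup_of_le h1 (le_iSup_of_le h2 le_rfl))


/-- the truncated Sobolev energy `g_N` satisfies, for Borel `p`-integrable
`f, g`, the estimate `g_N(f)^{1/p} ≤ g_N(g)^{1/p} + 2^{N+1} d_{L^p}(f,g)`; in particular
it is (sequentially) lower semicontinuous with respect to the `L^p` pseudometric. -/
theorem truncSobolevEnergy_lipschitz_and_lsc {Y : Type*} [MetricSpace Y]
    [MeasurableSpace Y] [BorelSpace Y]
    (p : ℝ) (hp : 1 ≤ p) (N : ℕ) (hN : 1 ≤ N) :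
    (∀ f g : ℝ → Y, Measurable f → Measurable g →
      (∃ y₀ : Y, ∫⁻ u in Icc (0:ℝ) 1, ENNReal.ofReal (dist (f u) y₀ ^ p) < ⊤) →
      (∃ y₀ : Y, ∫⁻ u in Icc (0:ℝ) 1, ENNReal.ofReal (dist (g u) y₀ ^ p) < ⊤) →
      (truncSobolevEnergy p N f) ^ (1/p)
        ≤ (truncSobolevEnergy p N g) ^ (1/p)
          + (2 : ℝ≥0∞) ^ (N + 1) *
            (∫⁻ u in Icc (0:ℝ) 1, ENNReal.ofReal (dist (f u) (g u) ^ p)) ^ (1/p)) ∧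
    (∀ f : ℝ → Y, Measurable f →
      (∃ y₀ : Y, ∫⁻ u in Icc (0:ℝ) 1, ENNReal.ofReal (dist (f u) y₀ ^ p) < ⊤) →
      ∀ fs : ℕ → ℝ → Y, (∀ n, Measurable (fs n)) →
      (∀ n, ∃ y₀ : Y, ∫⁻ u in Icc (0:ℝ) 1, ENNReal.ofReal (dist (fs n u) y₀ ^ p) < ⊤) →
      Tendsto (fun n => ∫⁻ u in Icc (0:ℝ) 1, ENNReal.ofReal (dist (fs n u) (f u) ^ p))
        atTop (nhds 0) →
      truncSobolevEnergy p N f ≤ liminf (fun n => truncSobolevEnergy p N (fs n)) atTop) := by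

  have hp0 : 0 < p := by linarith
  refine ⟨fun f g hf hg _ _ => aux_lip hp (aux_sm hf) (aux_sm hg), ?_⟩
  intro f hf _ fs hfs _ hlim
  have hlim2 : Tendsto (fun n => (2 : ℝ≥0∞) ^ (N + 1) *
      (∫⁻ u in Icc (0:ℝ) 1, ENNReal.ofReal (dist (fs n u) (f u) ^ p)) ^ (1/p))
      atTop (nhds 0) := by
    have h1 := hlim.ennrpow_const (1 / p)
    rw [ENNReal.zero_rpow_of_pos (by positivity)] at h1
    have h2 := ENNReal.Tendsto.const_mul (a := (2 : ℝ≥0∞) ^ (N + 1)) h1 (Or.inr (by simp))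
    simpa using h2
  refine le_of_forall_lt fun c hc => ?_
  obtain ⟨d, hcd, hd⟩ := exists_between hc
  refine lt_of_lt_of_le hcd (le_liminf_of_le (by isBoundedDefault) ?_)
  by_contra hcon
  have hfr : ∃ᶠ n in atTop, truncSobolevEnergy p N (fs n) < d := by
    refine (not_eventually.1 hcon).mono fun n hn => not_le.1 hn
  have hlim3 := hlim2.const_add (d ^ (1 / p))
  rw [add_zero] at hlim3
  have hle : truncSobolevEnergy p N f ^ (1 / p) ≤ d ^ (1 / p) := by
    refine ge_of_tendsto_of_frequently hlim3 (hfr.mono fun n hn => ?_)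
    have h1 := aux_lip (N := N) hp (aux_sm hf) (aux_sm (hfs n))
    simp_rw [dist_comm (f _) (fs n _)] at h1
    refine h1.trans ?_
    gcongr
  rw [ENNReal.rpow_le_rpow_iff (by positivity)] at hle
  exact absurd hle (not_le.2 hd)
end
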